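/- arXiv:math/0005279 — 2 statements merged into one kernel-verified Lean document; each statement's English description precedes it below -/
import Mathlib

section
/- Let d ≥ 1, δ > 0 and ρ > 0. There exists a constant C < ∞ (depending only on d, δ and ρ) such that for every y ∈ ℝ^d and every smooth function f : ℝ^d → ℂ all of whose derivatives are bounded, ρ ∫ φ_{δ,y}(x) |∇f(x)|² dx ≤ ∫ φ_{δ,y}(x) |Δf(x)|² dx + C ∫ φ_{δ,y}(x) |f(x)|² dx. -/
/-- The weight function `φ_{δ,y}(x) = exp(−√(1+δ²|x−y|²))` on `ℝ^d`. -/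
noncomputable def phi (d : ℕ) (δ : ℝ) (y x : EuclideanSpace ℝ (Fin d)) : ℝ :=
  Real.exp (-Real.sqrt (1 + δ ^ 2 * ‖x - y‖ ^ 2))

/-- The Laplacian `Δf(x) = Σ_j ∂²_j f(x)` of `f : ℝ^d → ℂ`, via the second iterated
Fréchet derivative evaluated on coordinate directions. -/
noncomputable def lap (d : ℕ) (f : EuclideanSpace ℝ (Fin d) → ℂ)
    (x : EuclideanSpace ℝ (Fin d)) : ℂ :=
  ∑ j : Fin d, iteratedFDeriv ℝ 2 f x
    ![EuclideanSpace.single j (1 : ℝ), EuclideanSpace.single j (1 : ℝ)]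

/-- `|∇f(x)|² = Σ_j |∂_j f(x)|²`. -/
noncomputable def gradSq (d : ℕ) (f : EuclideanSpace ℝ (Fin d) → ℂ)
    (x : EuclideanSpace ℝ (Fin d)) : ℝ :=
  ∑ j : Fin d, ‖fderiv ℝ f x (EuclideanSpace.single j (1 : ℝ))‖ ^ 2

open MeasureTheory

lemma phi_pos (d : ℕ) (δ : ℝ) (y x : EuclideanSpace ℝ (Fin d)) : 0 < phi d δ y x :=
  Real.exp_pos _

lemma continuous_phi (d : ℕ) (δ : ℝ) (y : EuclideanSpace ℝ (Fin d)) :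
    Continuous (phi d δ y) := by
  unfold phi
  fun_prop

lemma hasFDerivAt_phi (d : ℕ) (δ : ℝ) (y x : EuclideanSpace ℝ (Fin d)) :
    HasFDerivAt (phi d δ y)
      (-(phi d δ y x * δ ^ 2 / √(1 + δ ^ 2 * ‖x - y‖ ^ 2)) • innerSL ℝ (x - y)) x := by
  have hpos : 0 < 1 + δ ^ 2 * ‖x - y‖ ^ 2 := by positivity
  have hsq : HasFDerivAt (fun z => 1 + δ ^ 2 * ‖z - y‖ ^ 2)
      ((δ ^ 2) • (2 • (innerSL ℝ (x - y)).comp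
        (ContinuousLinearMap.id ℝ (EuclideanSpace ℝ (Fin d))))) x :=
    (((hasFDerivAt_id x).sub_const y).norm_sq.const_mul (δ ^ 2)).const_add 1
  refine ((hsq.sqrt hpos.ne').neg.exp).congr_fderiv ?_
  ext v
  simp [phi]
  field_simp

lemma norm_fderiv_phi_le (d : ℕ) {δ : ℝ} (hδ : 0 < δ) (y x : EuclideanSpace ℝ (Fin d)) :
    ‖fderiv ℝ (phi d δ y) x‖ ≤ δ * phi d δ y x := by
  have hφ := phi_pos d δ y x
  have hs : 0 < √(1 + δ ^ 2 * ‖x - y‖ ^ 2) := by positivity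
  have hle : δ * ‖x - y‖ ≤ √(1 + δ ^ 2 * ‖x - y‖ ^ 2) := by
    apply Real.le_sqrt_of_sq_le
    nlinarith
  rw [(hasFDerivAt_phi d δ y x).fderiv, norm_smul, innerSL_apply_norm, norm_neg, Real.norm_eq_abs,
    abs_of_nonneg (by positivity), div_mul_eq_mul_div, div_le_iff₀ hs]
  calc phi d δ y x * δ ^ 2 * ‖x - y‖ = δ * phi d δ y x * (δ * ‖x - y‖) := by ring
    _ ≤ _ := by gcongr

lemma integrable_phi (d : ℕ) {δ : ℝ} (hδ : 0 < δ) (y : EuclideanSpace ℝ (Fin d)) :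
    Integrable (phi d δ y) := by
  have hbracket : Integrable (fun x : EuclideanSpace ℝ (Fin d) =>
      ((1 : ℝ) + ‖x‖ ^ 2) ^ (-((d + 1 : ℕ) : ℝ) / 2)) :=
    integrable_rpow_neg_one_add_norm_sq (by simp)
  have hdom := (((hbracket.comp_smul hδ.ne').comp_sub_right y).const_mul ((d + 1).factorial : ℝ))
  refine hdom.mono' (continuous_phi d δ y).aestronglyMeasurable (.of_forall fun x => ?_)
  rw [Real.norm_eq_abs, abs_of_pos (phi_pos d δ y x), norm_smul, mul_pow, Real.norm_eq_abs, sq_abs,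
    phi, Real.exp_neg, Real.rpow_div_two_eq_sqrt _ (by positivity),
    Real.rpow_neg (by positivity), Real.rpow_natCast]
  have hs : 0 < √(1 + δ ^ 2 * ‖x - y‖ ^ 2) := by positivity
  have hexp := Real.pow_div_factorial_le_exp _ hs.le (d + 1)
  calc _ ≤ (√(1 + δ ^ 2 * ‖x - y‖ ^ 2) ^ (d + 1) / (d + 1).factorial)⁻¹ := by gcongr
    _ = _ := by rw [inv_div, div_eq_mul_inv]

lemma integrable_phi_mul (d : ℕ) {δ : ℝ} (hδ : 0 < δ) (y : EuclideanSpace ℝ (Fin d))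
    {g : EuclideanSpace ℝ (Fin d) → ℝ} (hg : Continuous g) {B : ℝ} (hB : ∀ x, ‖g x‖ ≤ B) :
    Integrable (fun x => phi d δ y x * g x) :=
  (integrable_phi d hδ y).mul_bdd hg.aestronglyMeasurable (.of_forall hB)

/-- The weighted energy estimate in a single direction `v`. -/
lemma integral_phi_mul_directional_le (d : ℕ) {δ : ℝ} (hδ : 0 < δ)
    (y v : EuclideanSpace ℝ (Fin d)) (hv : ‖v‖ = 1) {f g h : EuclideanSpace ℝ (Fin d) → ℂ}
    (hf : Continuous f) (hg : Continuous g) (hh : Continuous h)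
    {f' g' : EuclideanSpace ℝ (Fin d) → EuclideanSpace ℝ (Fin d) →L[ℝ] ℂ}
    (hf' : ∀ x, HasFDerivAt f (f' x) x) (hg' : ∀ x, HasFDerivAt g (g' x) x)
    (hfg : ∀ x, f' x v = g x) (hgh : ∀ x, g' x v = h x) {A B C : ℝ}
    (hA : ∀ x, ‖f x‖ ≤ A) (hB : ∀ x, ‖g x‖ ≤ B) (hC : ∀ x, ‖h x‖ ≤ C) :
    (∫ x, phi d δ y x * ‖g x‖ ^ 2) + 2 * (∫ x, phi d δ y x * inner ℝ (f x) (h x)) ≤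
      δ ^ 2 * ∫ x, phi d δ y x * ‖f x‖ ^ 2 := by
  have hinner : ∀ {a b : ℂ} {K L : ℝ}, ‖a‖ ≤ K → ‖b‖ ≤ L → ‖inner ℝ a b‖ ≤ K * L :=
    fun ha hb => (norm_inner_le_norm _ _).trans
      (mul_le_mul ha hb (norm_nonneg _) ((norm_nonneg _).trans ha))
  have int_ff : Integrable (fun x => phi d δ y x * ‖f x‖ ^ 2) :=
    integrable_phi_mul d hδ y (by fun_prop) (B := A ^ 2) fun x => by
      simpa using pow_le_pow_left₀ (norm_nonneg _) (hA x) 2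
  have int_gg : Integrable (fun x => phi d δ y x * ‖g x‖ ^ 2) :=
    integrable_phi_mul d hδ y (by fun_prop) (B := B ^ 2) fun x => by
      simpa using pow_le_pow_left₀ (norm_nonneg _) (hB x) 2
  have int_fh : Integrable (fun x => phi d δ y x * inner ℝ (f x) (h x)) :=
    integrable_phi_mul d hδ y (hf.inner hh) fun x => hinner (hA x) (hC x)
  have int_fg : Integrable (fun x => phi d δ y x * inner ℝ (f x) (g x)) :=
    integrable_phi_mul d hδ y (hf.inner hg) fun x => hinner (hA x) (hB x)
  have hφv : ∀ x, ‖fderiv ℝ (phi d δ y) x v‖ ≤ δ * phi d δ y x := fun x =>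
    ((fderiv ℝ (phi d δ y) x).le_opNorm v).trans (by
      rw [hv, mul_one]; exact norm_fderiv_phi_le d hδ y x)
  have int_dφ : Integrable (fun x => fderiv ℝ (phi d δ y) x v * inner ℝ (f x) (g x)) :=
    (((integrable_phi d hδ y).const_mul δ).mono' (measurable_fderiv_apply_const ℝ _ v
      |>.aestronglyMeasurable) (.of_forall hφv)).mul_bdd (hf.inner hg).aestronglyMeasurable
      (.of_forall fun x => hinner (hA x) (hB x))
  have hderiv : ∀ x, fderiv ℝ (fun x => (inner ℝ (f x) (g x) : ℝ)) x v =
      inner ℝ (f x) (h x) + ‖g x‖ ^ 2 := fun x => by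
    rw [((hf' x).inner ℝ (hg' x)).fderiv, ContinuousLinearMap.comp_apply,
      ContinuousLinearMap.prod_apply, fderivInnerCLM_apply, hfg, hgh, real_inner_self_eq_norm_sq]
  have hparts := integral_mul_fderiv_eq_neg_fderiv_mul_of_integrable (μ := volume) (v := v)
    (f := phi d δ y) (g := fun x => (inner ℝ (f x) (g x) : ℝ)) int_dφ
    (by simp only [hderiv, mul_add]; exact int_fh.add int_gg) int_fg
    (fun x _ => (hasFDerivAt_phi d δ y x).differentiableAt)
    (fun x _ => ((hf' x).inner ℝ (hg' x)).differentiableAt)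
  simp only [hderiv, mul_add] at hparts
  rw [integral_add int_fh int_gg, ← integral_neg] at hparts
  have hmono : ∫ x, -(fderiv ℝ (phi d δ y) x v * inner ℝ (f x) (g x)) ≤
      ∫ x, (2⁻¹ * (phi d δ y x * ‖g x‖ ^ 2) + δ ^ 2 / 2 * (phi d δ y x * ‖f x‖ ^ 2)) := by
    refine integral_mono int_dφ.neg ((int_gg.const_mul _).add (int_ff.const_mul _)) fun x => ?_
    have hφ := phi_pos d δ y x
    calc -(fderiv ℝ (phi d δ y) x v * inner ℝ (f x) (g x))
        ≤ ‖fderiv ℝ (phi d δ y) x v‖ * ‖inner ℝ (f x) (g x)‖ := by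
          rw [← norm_mul]; exact neg_le_abs _
      _ ≤ (δ * phi d δ y x) * (‖f x‖ * ‖g x‖) :=
          mul_le_mul (hφv x) (norm_inner_le_norm _ _) (norm_nonneg _) (by positivity)
      _ ≤ _ := by nlinarith [mul_nonneg hφ.le (sq_nonneg (δ * ‖f x‖ - ‖g x‖))]
  rw [integral_add (int_gg.const_mul _) (int_ff.const_mul _), integral_const_mul,
    integral_const_mul] at hmono
  linarith

/-- For all `d ≥ 1`, `δ > 0`, `ρ > 0` there is `C < ∞` such that for every `y` and every
smooth `f` with all derivatives bounded:
`ρ ∫ φ_{δ,y} |∇f|² ≤ ∫ φ_{δ,y} |Δf|² + C ∫ φ_{δ,y} |f|²`. -/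
theorem gradient_interpolation (d : ℕ) (hd : 1 ≤ d) (δ ρ : ℝ) (hδ : 0 < δ) (hρ : 0 < ρ) :
    ∃ C : ℝ, ∀ y : EuclideanSpace ℝ (Fin d), ∀ f : EuclideanSpace ℝ (Fin d) → ℂ,
      ContDiff ℝ (⊤ : ℕ∞) f → (∀ n : ℕ, ∃ B : ℝ, ∀ x, ‖iteratedFDeriv ℝ n f x‖ ≤ B) →
      ρ * (∫ x, phi d δ y x * gradSq d f x) ≤
        (∫ x, phi d δ y x * ‖lap d f x‖ ^ 2) + C * (∫ x, phi d δ y x * ‖f x‖ ^ 2) := by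
  refine ⟨ρ * (d * δ ^ 2) + ρ ^ 2, fun y f hf hbound => ?_⟩
  obtain ⟨A, hA⟩ := hbound 0
  obtain ⟨B, hB⟩ := hbound 1
  obtain ⟨C, hC⟩ := hbound 2
  simp only [norm_iteratedFDeriv_zero] at hA
  simp only [norm_iteratedFDeriv_one] at hB
  set e : Fin d → EuclideanSpace ℝ (Fin d) := fun j => EuclideanSpace.single j (1 : ℝ) with he
  have he1 : ∀ j, ‖e j‖ = 1 := fun j => by simp [he]
  set h : Fin d → EuclideanSpace ℝ (Fin d) → ℂ :=
    fun j x => iteratedFDeriv ℝ 2 f x ![e j, e j] with hh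
  have hf1 : ContDiff ℝ 1 (fderiv ℝ f) := hf.fderiv_right (by norm_cast)
  have cont_f : Continuous f := hf.continuous
  have cont_g : ∀ j, Continuous (fun x => fderiv ℝ f x (e j)) := fun j =>
    hf1.continuous.clm_apply continuous_const
  have cont_h : ∀ j, Continuous (h j) := fun j => by
    simp only [hh, iteratedFDeriv_two_apply]
    exact ((hf1.continuous_fderiv one_ne_zero).clm_apply continuous_const).clm_apply
      continuous_const
  have bound_g : ∀ j x, ‖fderiv ℝ f x (e j)‖ ≤ B := fun j x =>
    ((fderiv ℝ f x).le_opNorm _).trans (by simpa [he1] using hB x)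
  have bound_h : ∀ j x, ‖h j x‖ ≤ C := fun j x =>
    ((iteratedFDeriv ℝ 2 f x).le_opNorm _).trans (by
      simpa [Fin.prod_univ_two, he1] using hC x)
  have hlap : ∀ x, lap d f x = ∑ j, h j x := fun _ => rfl
  have cont_lap : Continuous (lap d f) := by
    rw [funext hlap]
    exact continuous_finsetSum _ fun j _ => cont_h j
  have bound_lap : ∀ x, ‖lap d f x‖ ≤ d * C := fun x => by
    rw [hlap]
    exact (norm_sum_le_of_le _ fun j _ => bound_h j x).trans (by simp)
  have int_ff : Integrable (fun x => phi d δ y x * ‖f x‖ ^ 2) :=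
    integrable_phi_mul d hδ y (by fun_prop) (B := A ^ 2) fun x => by
      simpa using pow_le_pow_left₀ (norm_nonneg _) (hA x) 2
  have int_ll : Integrable (fun x => phi d δ y x * ‖lap d f x‖ ^ 2) :=
    integrable_phi_mul d hδ y (by fun_prop) (B := (d * C) ^ 2) fun x => by
      simpa only [norm_pow, norm_norm] using pow_le_pow_left₀ (norm_nonneg _) (bound_lap x) 2
  have int_gg : ∀ j, Integrable (fun x => phi d δ y x * ‖fderiv ℝ f x (e j)‖ ^ 2) := fun j =>
    integrable_phi_mul d hδ y ((cont_g j).norm.pow 2) (B := B ^ 2) fun x => by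
      simpa only [norm_pow, norm_norm] using pow_le_pow_left₀ (norm_nonneg _) (bound_g j x) 2
  have int_fh : ∀ j, Integrable (fun x => phi d δ y x * inner ℝ (f x) (h j x)) := fun j =>
    integrable_phi_mul d hδ y (cont_f.inner (cont_h j)) (B := A * C) fun x =>
      (norm_inner_le_norm _ _).trans
        (mul_le_mul (hA x) (bound_h j x) (norm_nonneg _) ((norm_nonneg _).trans (hA x)))
  have hdir : ∀ j, _ := fun j => integral_phi_mul_directional_le d hδ y (e j) (he1 j) cont_f
    (cont_g j) (cont_h j) (fun x => (hf.differentiable (by simp) x).hasFDerivAt)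
    (fun x => ((hf1.differentiable one_ne_zero x).hasFDerivAt.clm_apply
      (hasFDerivAt_const (e j) x))) (fun _ => rfl)
    (fun x => by simp [hh, iteratedFDeriv_two_apply]) hA (bound_g j) (bound_h j)
  have hsum := Finset.sum_le_sum fun j (_ : j ∈ Finset.univ) => hdir j
  rw [Finset.sum_add_distrib, ← Finset.mul_sum, ← integral_finsetSum _ fun j _ => int_gg j,
    ← integral_finsetSum _ fun j _ => int_fh j] at hsum
  simp only [← Finset.mul_sum, ← inner_sum, ← hlap, Finset.sum_const, Finset.card_univ,
    Fintype.card_fin, nsmul_eq_mul] at hsum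
  have int_fl : Integrable (fun x => phi d δ y x * inner ℝ (f x) (lap d f x)) := by
    simpa only [hlap, inner_sum, Finset.mul_sum] using integrable_finsetSum _ fun j _ => int_fh j
  have hcross : -(2 * ρ * ∫ x, phi d δ y x * inner ℝ (f x) (lap d f x)) ≤
      (∫ x, phi d δ y x * ‖lap d f x‖ ^ 2) + ρ ^ 2 * ∫ x, phi d δ y x * ‖f x‖ ^ 2 := by
    rw [← integral_const_mul, ← integral_const_mul, ← integral_neg,
      ← integral_add int_ll (int_ff.const_mul _)]
    refine integral_mono (int_fl.const_mul _).neg (int_ll.add (int_ff.const_mul _)) fun x => ?_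
    have hsq : 0 ≤ ‖lap d f x‖ ^ 2 + 2 * ρ * inner ℝ (f x) (lap d f x) + ρ ^ 2 * ‖f x‖ ^ 2 := by
      have := abs_le.1 (abs_real_inner_le_norm (f x) (lap d f x))
      nlinarith [sq_nonneg (‖lap d f x‖ - ρ * ‖f x‖)]
    have := mul_nonneg (phi_pos d δ y x).le hsq
    simp only
    linarith
  change ρ * (∫ x, phi d δ y x * ∑ j, ‖fderiv ℝ f x (e j)‖ ^ 2) ≤ _
  have := mul_le_mul_of_nonneg_left hsum hρ.le
  linarith
end

section
/- Let q > 1/2, α ∈ ℝ, β ∈ ℝ with |β| ≤ √(2q+1)/q, and R > 1. There exist constants A, B, C < ∞ (depending only on q, α, β, R) such that for all sufficiently small ε > 0 and all L > 0 the following holds. Let g : ℝ × [0,1] → ℂ be bounded and continuous, and let 𝒮 be a set of bounded classical solutions u : ℝ × [0,1] → ℂ of ∂_t u = (1+iα)∂²_x u + u − (1+iβ)|u|^{2q}u + g, all with the same forcing g and with sup_{x,t} |u(x,t)| ≤ R. Set L'' = L + C log(1/ε). If the set of initial data { u(·,0) : u ∈ 𝒮 } can be covered by N sets each of diameter at most 2ε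 in the supremum norm on [−L''/2, L''/2], then the set of time-one states { u(·,1) : u ∈ 𝒮 } can be covered by at most N · A^{L} · B^{1/ε²} sets each of diameter at most ε in the supremum norm on [−L/2, L/2]. -/
open Complex

/-- `u` is a bounded classical solution on `ℝ × [0,1]` of the one-dimensional
Ginzburg–Landau equation `∂_t u = (1+iα)∂²_x u + u − (1+iβ)|u|^{2q}u + g`:
jointly continuous, `C²` in `x`, bounded together with its first and second spatial
derivatives, and satisfying the equation pointwise. -/
def IsGLSolution1D (q α β : ℝ) (g u : ℝ → ℝ → ℂ) : Prop :=
  ContinuousOn (fun p : ℝ × ℝ => u p.1 p.2) (Set.univ ×ˢ Set.Icc 0 1) ∧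
  (∀ t ∈ Set.Icc (0 : ℝ) 1, ContDiff ℝ 2 (fun x => u x t)) ∧
  (∃ B : ℝ, ∀ t ∈ Set.Icc (0 : ℝ) 1, ∀ x : ℝ, ‖u x t‖ ≤ B ∧
      ‖deriv (fun x' => u x' t) x‖ ≤ B ∧ ‖deriv (deriv (fun x' => u x' t)) x‖ ≤ B) ∧
  (∀ x : ℝ, ∀ t ∈ Set.Icc (0 : ℝ) 1, HasDerivWithinAt (fun s => u x s)
      ((1 + Complex.I * (α : ℂ)) * deriv (deriv (fun x' => u x' t)) x + u x t -
        (1 + Complex.I * (β : ℂ)) * ((‖u x t‖ ^ (2 * q) : ℝ) : ℂ) * u x t + g x t)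
      (Set.Icc 0 1) t)


noncomputable section

open MeasureTheory Filter Topology Set

namespace GinzburgLandauCover

/-! ### The exponentially decaying weight -/

/-- The weight `1 / cosh (x - c)`. -/
def sechWeight (c x : ℝ) : ℝ := (Real.cosh (x - c))⁻¹

/-- The measure with density `1 / cosh (x - c)`. -/
def sechMeasure (c : ℝ) : Measure ℝ :=
  volume.withDensity fun x => ENNReal.ofReal (sechWeight c x)

lemma sechWeight_pos (c x : ℝ) : 0 < sechWeight c x := inv_pos.2 (Real.cosh_pos _)

lemma continuous_sechWeight (c : ℝ) : Continuous (sechWeight c) :=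
  (Real.continuous_cosh.comp (continuous_id.sub continuous_const)).inv₀
    fun _ => (Real.cosh_pos _).ne'

lemma sechWeight_le (c x : ℝ) : sechWeight c x ≤ 2 * Real.exp (-|x - c|) := by
  have h : Real.exp |x - c| / 2 ≤ Real.cosh (x - c) := by
    rw [← Real.cosh_abs, Real.cosh_eq]
    linarith [Real.exp_pos (-|x - c|)]
  calc sechWeight c x ≤ (Real.exp |x - c| / 2)⁻¹ := inv_anti₀ (by positivity) h
    _ = 2 * Real.exp (-|x - c|) := by rw [Real.exp_neg, inv_div]; rfl

lemma integrable_exp_neg_half_abs_sub (c : ℝ) :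
    Integrable fun x : ℝ => Real.exp (-(|x - c| / 2)) := by
  suffices h : Integrable fun x : ℝ => Real.exp (-(|x| / 2)) from h.comp_sub_right c
  rw [← integrableOn_univ, ← Iic_union_Ioi (a := (0 : ℝ))]
  refine IntegrableOn.union ?_ ?_
  · refine (integrableOn_exp_mul_Iic (a := 1 / 2) (by norm_num) 0).congr_fun
      (fun x hx => ?_) measurableSet_Iic
    simp only [abs_of_nonpos (mem_Iic.1 hx)]
    ring_nf
  · refine (integrableOn_exp_mul_Ioi (a := -(1 / 2)) (by norm_num) 0).congr_fun
      (fun x hx => ?_) measurableSet_Ioi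
    simp only [abs_of_pos (mem_Ioi.1 hx)]
    ring_nf

lemma integrable_sechWeight (c : ℝ) : Integrable (sechWeight c) := by
  refine ((integrable_exp_neg_half_abs_sub c).const_mul 2).mono'
    (continuous_sechWeight c).aestronglyMeasurable (ae_of_all _ fun x => ?_)
  rw [Real.norm_of_nonneg (sechWeight_pos c x).le]
  refine (sechWeight_le c x).trans ?_
  gcongr
  linarith [abs_nonneg (x - c)]

instance (c : ℝ) : IsFiniteMeasure (sechMeasure c) :=
  isFiniteMeasure_withDensity_ofReal (integrable_sechWeight c).2

lemma integral_sechMeasure (c : ℝ) (f : ℝ → ℝ) :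
    ∫ x, f x ∂sechMeasure c = ∫ x, sechWeight c x * f x := by
  rw [sechMeasure, integral_withDensity_eq_integral_toReal_smul
    (continuous_sechWeight c).measurable.ennreal_ofReal (ae_of_all _ fun _ => ENNReal.ofReal_lt_top)]
  simp only [ENNReal.toReal_ofReal (sechWeight_pos c _).le, smul_eq_mul]

lemma hasDerivAt_sechWeight (c x : ℝ) :
    HasDerivAt (sechWeight c) (-Real.tanh (x - c) * sechWeight c x) x := by
  have h := (((hasDerivAt_id x).sub_const c).cosh).inv (Real.cosh_pos _).ne'
  refine h.congr_deriv ?_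
  have := (Real.cosh_pos (x - c)).ne'
  simp only [id, sechWeight, Real.tanh_eq_sinh_div_cosh]
  field_simp

lemma continuous_tanh_sub (c : ℝ) : Continuous fun x => Real.tanh (x - c) := by
  simp only [Real.tanh_eq_sinh_div_cosh]
  have := fun x : ℝ => (Real.cosh_pos (x - c)).ne'
  fun_prop (disch := assumption)

lemma abs_tanh_le_one (x : ℝ) : |Real.tanh x| ≤ 1 :=
  (Real.abs_tanh_lt_one x).le

/-- A bounded continuous function is integrable for a finite measure. -/
lemma integrable_of_continuous_bounded {μ : Measure ℝ} [IsFiniteMeasure μ] {f : ℝ → ℝ}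
    (hf : Continuous f) {b : ℝ} (hb : ∀ x, |f x| ≤ b) : Integrable f μ :=
  (integrable_const b).mono' hf.aestronglyMeasurable (ae_of_all _ hb)

lemma integrable_sechWeight_mul (c : ℝ) {f : ℝ → ℝ} (hf : Continuous f) {b : ℝ}
    (hb : ∀ x, |f x| ≤ b) : Integrable fun x => sechWeight c x * f x :=
  (integrable_sechWeight c).mul_bdd hf.aestronglyMeasurable (ae_of_all _ hb)

/-- Integration by parts against the weight. -/
lemma integral_inner_deriv_sechMeasure (c : ℝ) {p p' r r' : ℝ → ℂ} {b : ℝ}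
    (hp : ∀ x, HasDerivAt p (p' x) x) (hr : ∀ x, HasDerivAt r (r' x) x)
    (hp' : Continuous p') (hr' : Continuous r')
    (bp : ∀ x, ‖p x‖ ≤ b) (bp' : ∀ x, ‖p' x‖ ≤ b) (br : ∀ x, ‖r x‖ ≤ b) (br' : ∀ x, ‖r' x‖ ≤ b) :
    ∫ x, inner ℝ (p x) (r' x) ∂sechMeasure c =
      ∫ x, (Real.tanh (x - c) * inner ℝ (p x) (r x) - inner ℝ (p' x) (r x)) ∂sechMeasure c := by
  have hb : 0 ≤ b := (norm_nonneg _).trans (bp 0)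
  have cp : Continuous p := continuous_iff_continuousAt.2 fun x => (hp x).continuousAt
  have cr : Continuous r := continuous_iff_continuousAt.2 fun x => (hr x).continuousAt
  have ct := continuous_tanh_sub c
  have key : ∀ {y z : ℂ}, ‖y‖ ≤ b → ‖z‖ ≤ b → |inner ℝ y z| ≤ b * b := fun hy hz =>
    (abs_real_inner_le_norm _ _).trans (mul_le_mul hy hz (norm_nonneg _) hb)
  have i1 : Integrable (fun x => inner ℝ (p x) (r' x)) (sechMeasure c) :=
    integrable_of_continuous_bounded (cp.inner hr') fun x => key (bp x) (br' x)
  have b2 : ∀ x, |Real.tanh (x - c) * inner ℝ (p x) (r x) - inner ℝ (p' x) (r x)|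
      ≤ b * b + b * b := fun x => by
    refine (abs_sub _ _).trans (add_le_add ?_ (key (bp' x) (br x)))
    rw [abs_mul]
    exact (mul_le_of_le_one_left (abs_nonneg _) (abs_tanh_le_one _)).trans (key (bp x) (br x))
  have c2 : Continuous fun x => Real.tanh (x - c) * inner ℝ (p x) (r x) - inner ℝ (p' x) (r x) :=
    (ct.mul (cp.inner cr)).sub (hp'.inner cr)
  have i2 := integrable_of_continuous_bounded (μ := sechMeasure c) c2 b2
  rw [← sub_eq_zero, ← integral_sub i1 i2, integral_sechMeasure]
  refine integral_eq_zero_of_hasDerivAt_of_integrable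
    (f := fun x => sechWeight c x * inner ℝ (p x) (r x)) (fun x => ?_) ?_ ?_
  · refine ((hasDerivAt_sechWeight c x).mul ((hp x).inner ℝ (hr x))).congr_deriv ?_
    ring
  · refine integrable_sechWeight_mul c ((cp.inner hr').sub c2) (b := b * b + (b * b + b * b))
      fun x => (abs_sub _ _).trans (add_le_add (key (bp x) (br' x)) (b2 x))
  · exact integrable_sechWeight_mul c (cp.inner cr) fun x => key (bp x) (br x)

/-! ### Weighted energy estimate -/

/-- `w` (with time as first argument) solves `∂_t w = a ∂²_x w + F` on `[0,1] × ℝ`, where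
`Re a = 1` and `|F| ≤ K |w|`, and `w`, `wx = ∂_x w`, `wxx = ∂²_x w` are bounded by `b`. -/
structure IsParabolicSolution (a : ℂ) (K b : ℝ) (w wx wxx F : ℝ → ℝ → ℂ) : Prop where
  re_eq_one : a.re = 1
  K_nonneg : 0 ≤ K
  hasDerivAt_w : ∀ t ∈ Icc (0 : ℝ) 1, ∀ x, HasDerivAt (w t) (wx t x) x
  hasDerivAt_wx : ∀ t ∈ Icc (0 : ℝ) 1, ∀ x, HasDerivAt (wx t) (wxx t x) x
  continuous_wxx : ∀ t ∈ Icc (0 : ℝ) 1, Continuous (wxx t)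
  continuous_F : ∀ t ∈ Icc (0 : ℝ) 1, Continuous (F t)
  norm_w_le : ∀ t ∈ Icc (0 : ℝ) 1, ∀ x, ‖w t x‖ ≤ b
  norm_wx_le : ∀ t ∈ Icc (0 : ℝ) 1, ∀ x, ‖wx t x‖ ≤ b
  norm_wxx_le : ∀ t ∈ Icc (0 : ℝ) 1, ∀ x, ‖wxx t x‖ ≤ b
  norm_F_le : ∀ t ∈ Icc (0 : ℝ) 1, ∀ x, ‖F t x‖ ≤ K * ‖w t x‖
  hasDerivWithinAt : ∀ t ∈ Icc (0 : ℝ) 1, ∀ x,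
    HasDerivWithinAt (fun s => w s x) (a * wxx t x + F t x) (Icc 0 1) t

/-- The time-weighted energy `∫ (M |w|² + t |∂_x w|²)`, with `M = |a|² + 2`. -/
def energy (a : ℂ) (w wx : ℝ → ℝ → ℂ) (c t : ℝ) : ℝ :=
  ∫ x, ((‖a‖ ^ 2 + 2) * ‖w t x‖ ^ 2 + t * ‖wx t x‖ ^ 2) ∂sechMeasure c

/-- The multiplier obtained by varying the energy. -/
def multiplier (a : ℂ) (w wx wxx : ℝ → ℝ → ℂ) (c s t x : ℝ) : ℂ :=
  (2 * (‖a‖ ^ 2 + 2)) • w t x + (2 * s) • (Real.tanh (x - c) • wx t x - wxx t x)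

/-- The exponential growth rate of the energy. -/
def growthRate (a : ℂ) (K : ℝ) : ℝ := ‖a‖ ^ 2 + 2 * K + 2 * K ^ 2

lemma normSq_sub_le (y z : ℂ) : ‖y‖ ^ 2 - ‖z‖ ^ 2 ≤ 2 * inner ℝ y (y - z) := by
  have h := norm_sub_sq_real y z
  rw [inner_sub_right, real_inner_self_eq_norm_sq]
  linarith [sq_nonneg ‖y - z‖]

lemma inner_mul_self_eq {a : ℂ} (ha : a.re = 1) (z : ℂ) : inner ℝ z (a * z) = ‖z‖ ^ 2 := by
  rw [Complex.inner, ← Complex.normSq_eq_norm_sq, mul_assoc, Complex.mul_conj]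
  simp [ha]

lemma abs_inner_le {y z : ℂ} {r s : ℝ} (hy : ‖y‖ ≤ r) (hz : ‖z‖ ≤ s) :
    |inner ℝ y z| ≤ r * s :=
  (abs_real_inner_le_norm _ _).trans
    (mul_le_mul hy hz (norm_nonneg _) ((norm_nonneg _).trans hy))

/-- The pointwise inequality behind the energy estimate. -/
lemma energy_density_le {a : ℂ} (ha : a.re = 1) {K : ℝ} (hK : 0 ≤ K) {t θ : ℝ}
    (ht : t ∈ Icc (0 : ℝ) 1) (hθ : |θ| ≤ 1) {w wx wxx F : ℂ} (hF : ‖F‖ ≤ K * ‖w‖) :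
    2 * (‖a‖ ^ 2 + 2) * inner ℝ w F + 2 * t * inner ℝ (θ • wx - wxx) (a * wxx + F) + ‖wx‖ ^ 2
      + 2 * (‖a‖ ^ 2 + 2) * (θ * inner ℝ w (a * wx) - inner ℝ wx (a * wx))
      ≤ growthRate a K * ((‖a‖ ^ 2 + 2) * ‖w‖ ^ 2 + t * ‖wx‖ ^ 2) := by
  have mulθ : ∀ {r s : ℝ}, |r| ≤ s → θ * r ≤ s := fun {r s} h =>
    (le_abs_self _).trans (by
      rw [abs_mul]; exact (mul_le_of_le_one_left (abs_nonneg _) hθ).trans h)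
  have e1 : inner ℝ w F ≤ ‖w‖ * (K * ‖w‖) := (le_abs_self _).trans (abs_inner_le le_rfl hF)
  have e2 : θ * inner ℝ w (a * wx) ≤ ‖w‖ * (‖a‖ * ‖wx‖) :=
    mulθ (abs_inner_le le_rfl (norm_mul _ _).le)
  have e3 : θ * inner ℝ wx (a * wxx) ≤ ‖wx‖ * (‖a‖ * ‖wxx‖) :=
    mulθ (abs_inner_le le_rfl (norm_mul _ _).le)
  have e4 : θ * inner ℝ wx F ≤ ‖wx‖ * (K * ‖w‖) := mulθ (abs_inner_le le_rfl hF)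
  have e5 : -inner ℝ wxx F ≤ ‖wxx‖ * (K * ‖w‖) :=
    (neg_le_abs _).trans (abs_inner_le le_rfl hF)
  have expand : inner ℝ (θ • wx - wxx) (a * wxx + F) =
      θ * inner ℝ wx (a * wxx) + θ * inner ℝ wx F - ‖wxx‖ ^ 2 - inner ℝ wxx F := by
    rw [inner_sub_left, inner_add_right, inner_add_right, real_inner_smul_left,
      real_inner_smul_left, inner_mul_self_eq ha]
    ring
  rw [expand, inner_mul_self_eq ha, growthRate]
  generalize inner ℝ w F = i1 at *
  generalize θ * inner ℝ w (a * wx) = i2 at *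
  generalize θ * inner ℝ wx (a * wxx) = i3 at *
  generalize θ * inner ℝ wx F = i4 at *
  generalize inner ℝ wxx F = i5 at *
  have hA := norm_nonneg a
  generalize ‖a‖ = A at *
  generalize ‖w‖ = W at *
  generalize ‖wx‖ = Z at *
  generalize ‖wxx‖ = X at *
  have g1 : i3 + i4 - X ^ 2 - i5 ≤ (A ^ 2 + 1) / 2 * Z ^ 2 + K ^ 2 * W ^ 2 := by
    nlinarith [sq_nonneg (X - A * Z), sq_nonneg (X - K * W), sq_nonneg (Z - K * W)]
  have g2 : 2 * (i1 + (i2 - Z ^ 2)) ≤ -Z ^ 2 + (A ^ 2 + 2 * K) * W ^ 2 := by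
    nlinarith [sq_nonneg (Z - A * W)]
  have g1' := mul_le_mul_of_nonneg_left g1 (mul_nonneg zero_le_two ht.1)
  have g2' := mul_le_mul_of_nonneg_left g2 (by positivity : 0 ≤ A ^ 2 + 2)
  have t1 : t * ((A ^ 2 + 1) * Z ^ 2) ≤ (A ^ 2 + 1) * Z ^ 2 :=
    mul_le_of_le_one_left (by positivity) ht.2
  have t2 : t * (2 * K ^ 2 * W ^ 2) ≤ 2 * K ^ 2 * W ^ 2 :=
    mul_le_of_le_one_left (by positivity) ht.2
  have t3 : 2 * K ^ 2 * W ^ 2 ≤ 2 * K ^ 2 * ((A ^ 2 + 2) * W ^ 2) := by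
    have : 0 ≤ 2 * K ^ 2 * ((A ^ 2 + 1) * W ^ 2) := by positivity
    nlinarith
  have t4 : 0 ≤ (A ^ 2 + 2 * K + 2 * K ^ 2) * (t * Z ^ 2) := by
    have := ht.1
    positivity
  linarith

namespace IsParabolicSolution

variable {a : ℂ} {K b : ℝ} {w wx wxx F : ℝ → ℝ → ℂ}

lemma continuous_w (h : IsParabolicSolution a K b w wx wxx F) {t : ℝ} (ht : t ∈ Icc (0 : ℝ) 1) :
    Continuous (w t) :=
  continuous_iff_continuousAt.2 fun x => (h.hasDerivAt_w t ht x).continuousAt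

lemma continuous_wx (h : IsParabolicSolution a K b w wx wxx F) {t : ℝ} (ht : t ∈ Icc (0 : ℝ) 1) :
    Continuous (wx t) :=
  continuous_iff_continuousAt.2 fun x => (h.hasDerivAt_wx t ht x).continuousAt

lemma b_nonneg (h : IsParabolicSolution a K b w wx wxx F) : 0 ≤ b :=
  (norm_nonneg _).trans (h.norm_w_le 0 (left_mem_Icc.2 zero_le_one) 0)

lemma norm_time_deriv_le (h : IsParabolicSolution a K b w wx wxx F) {t : ℝ}
    (ht : t ∈ Icc (0 : ℝ) 1) (x : ℝ) : ‖a * wxx t x + F t x‖ ≤ ‖a‖ * b + K * b := by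
  refine (norm_add_le _ _).trans (add_le_add ?_ ((h.norm_F_le t ht x).trans ?_))
  · rw [norm_mul]
    exact mul_le_mul_of_nonneg_left (h.norm_wxx_le t ht x) (norm_nonneg _)
  · exact mul_le_mul_of_nonneg_left (h.norm_w_le t ht x) h.K_nonneg

lemma norm_w_sub_le (h : IsParabolicSolution a K b w wx wxx F) {s t : ℝ}
    (hs : s ∈ Icc (0 : ℝ) 1) (ht : t ∈ Icc (0 : ℝ) 1) (x : ℝ) :
    ‖w t x - w s x‖ ≤ (‖a‖ * b + K * b) * |t - s| :=
  (convex_Icc (0 : ℝ) 1).norm_image_sub_le_of_norm_hasDerivWithin_le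
    (fun r hr => h.hasDerivWithinAt r hr x) (fun _ hr => h.norm_time_deriv_le hr x) hs ht

lemma continuous_multiplier (h : IsParabolicSolution a K b w wx wxx F) {t : ℝ}
    (ht : t ∈ Icc (0 : ℝ) 1) (c s : ℝ) : Continuous (multiplier a w wx wxx c s t) := by
  have h1 := h.continuous_w ht
  have h2 := h.continuous_wx ht
  have h3 := h.continuous_wxx t ht
  have h4 := continuous_tanh_sub c
  unfold multiplier
  fun_prop

lemma norm_multiplier_le (h : IsParabolicSolution a K b w wx wxx F) {s t : ℝ}
    (hs : s ∈ Icc (0 : ℝ) 1) (ht : t ∈ Icc (0 : ℝ) 1) (c x : ℝ) :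
    ‖multiplier a w wx wxx c s t x‖ ≤ 2 * (‖a‖ ^ 2 + 2) * b + 2 * (b + b) := by
  refine (norm_add_le _ _).trans (add_le_add ?_ ?_)
  · rw [norm_smul, Real.norm_of_nonneg (by positivity)]
    exact mul_le_mul_of_nonneg_left (h.norm_w_le t ht x) (by positivity)
  · rw [norm_smul, Real.norm_of_nonneg (by linarith [hs.1])]
    refine mul_le_mul (by linarith [hs.2]) ?_ (norm_nonneg _) zero_le_two
    refine (norm_sub_le _ _).trans (add_le_add ?_ (h.norm_wxx_le t ht x))
    rw [norm_smul]
    exact (mul_le_of_le_one_left (norm_nonneg _) (abs_tanh_le_one _)).trans (h.norm_wx_le t ht x)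

lemma integrable_normSq_w (h : IsParabolicSolution a K b w wx wxx F) {t : ℝ}
    (ht : t ∈ Icc (0 : ℝ) 1) (c : ℝ) : Integrable (fun x => ‖w t x‖ ^ 2) (sechMeasure c) :=
  integrable_of_continuous_bounded ((h.continuous_w ht).norm.pow 2) (b := b ^ 2) fun x => by
    rw [abs_of_nonneg (by positivity)]
    exact pow_le_pow_left₀ (norm_nonneg _) (h.norm_w_le t ht x) 2

lemma integrable_normSq_wx (h : IsParabolicSolution a K b w wx wxx F) {t : ℝ}
    (ht : t ∈ Icc (0 : ℝ) 1) (c : ℝ) : Integrable (fun x => ‖wx t x‖ ^ 2) (sechMeasure c) :=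
  integrable_of_continuous_bounded ((h.continuous_wx ht).norm.pow 2) (b := b ^ 2) fun x => by
    rw [abs_of_nonneg (by positivity)]
    exact pow_le_pow_left₀ (norm_nonneg _) (h.norm_wx_le t ht x) 2

lemma integrable_inner_multiplier (h : IsParabolicSolution a K b w wx wxx F) {s t : ℝ}
    (hs : s ∈ Icc (0 : ℝ) 1) (ht : t ∈ Icc (0 : ℝ) 1) (c : ℝ) {f : ℝ → ℂ} (hf : Continuous f)
    {M : ℝ} (hM : ∀ x, ‖f x‖ ≤ M) :
    Integrable (fun x => inner ℝ (multiplier a w wx wxx c s t x) (f x)) (sechMeasure c) :=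
  integrable_of_continuous_bounded ((h.continuous_multiplier ht c s).inner hf)
    fun x => abs_inner_le (h.norm_multiplier_le hs ht c x) (hM x)

lemma integrable_inner {μ : Measure ℝ} [IsFiniteMeasure μ] {f g : ℝ → ℂ} (hf : Continuous f)
    (hg : Continuous g) {M N : ℝ} (hM : ∀ x, ‖f x‖ ≤ M) (hN : ∀ x, ‖g x‖ ≤ N) :
    Integrable (fun x => inner ℝ (f x) (g x)) μ :=
  integrable_of_continuous_bounded (hf.inner hg) fun x => abs_inner_le (hM x) (hN x)

/-- Increments of the energy are controlled linearly by the increment of `w`: convexity of the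
energy and an integration by parts. -/
lemma energy_sub_le (h : IsParabolicSolution a K b w wx wxx F) {s t : ℝ}
    (hs : s ∈ Icc (0 : ℝ) 1) (ht : t ∈ Icc (0 : ℝ) 1) (c : ℝ) :
    energy a w wx c t - energy a w wx c s ≤
      ∫ x, inner ℝ (multiplier a w wx wxx c s t x) (w t x - w s x) ∂sechMeasure c
        + (t - s) * ∫ x, ‖wx t x‖ ^ 2 ∂sechMeasure c := by
  have hd : ∀ x, ‖w t x - w s x‖ ≤ b + b := fun x =>
    (norm_sub_le _ _).trans (add_le_add (h.norm_w_le t ht x) (h.norm_w_le s hs x))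
  have hdx : ∀ x, ‖wx t x - wx s x‖ ≤ b + b := fun x =>
    (norm_sub_le _ _).trans (add_le_add (h.norm_wx_le t ht x) (h.norm_wx_le s hs x))
  have hb : b ≤ b + b := by linarith [h.b_nonneg]
  have cd : Continuous fun x => w t x - w s x := (h.continuous_w ht).sub (h.continuous_w hs)
  have cdx : Continuous fun x => wx t x - wx s x := (h.continuous_wx ht).sub (h.continuous_wx hs)
  have ibp := integral_inner_deriv_sechMeasure c (b := b + b) (h.hasDerivAt_wx t ht)
    (fun x => (h.hasDerivAt_w t ht x).fun_sub (h.hasDerivAt_w s hs x))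
    (h.continuous_wxx t ht) cdx (fun x => (h.norm_wx_le t ht x).trans hb)
    (fun x => (h.norm_wxx_le t ht x).trans hb) hd hdx
  have i1 : ∀ r ∈ Icc (0 : ℝ) 1, Integrable
      (fun x => (‖a‖ ^ 2 + 2) * ‖w r x‖ ^ 2 + r * ‖wx r x‖ ^ 2) (sechMeasure c) := fun r hr =>
    ((h.integrable_normSq_w hr c).const_mul _).add ((h.integrable_normSq_wx hr c).const_mul _)
  have iw : Integrable (fun x => inner ℝ (w t x) (w t x - w s x)) (sechMeasure c) :=
    integrable_inner (h.continuous_w ht) cd (h.norm_w_le t ht) hd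
  have iwx : Integrable (fun x => inner ℝ (wx t x) (wx t x - wx s x)) (sechMeasure c) :=
    integrable_inner (h.continuous_wx ht) cdx (h.norm_wx_le t ht) hdx
  have it : Integrable (fun x => Real.tanh (x - c) * inner ℝ (wx t x) (w t x - w s x)
      - inner ℝ (wxx t x) (w t x - w s x)) (sechMeasure c) := by
    refine Integrable.sub ?_
      (integrable_inner (h.continuous_wxx t ht) cd (h.norm_wxx_le t ht) hd)
    exact (integrable_inner (h.continuous_wx ht) cd (h.norm_wx_le t ht) hd).bdd_mul
      (continuous_tanh_sub c).aestronglyMeasurable (ae_of_all _ fun x => abs_tanh_le_one _)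
  calc energy a w wx c t - energy a w wx c s
      = ∫ x, (((‖a‖ ^ 2 + 2) * ‖w t x‖ ^ 2 + t * ‖wx t x‖ ^ 2)
          - ((‖a‖ ^ 2 + 2) * ‖w s x‖ ^ 2 + s * ‖wx s x‖ ^ 2)) ∂sechMeasure c :=
        (integral_sub (i1 t ht) (i1 s hs)).symm
    _ ≤ ∫ x, (2 * (‖a‖ ^ 2 + 2) * inner ℝ (w t x) (w t x - w s x)
          + 2 * s * inner ℝ (wx t x) (wx t x - wx s x) + (t - s) * ‖wx t x‖ ^ 2)
            ∂sechMeasure c := by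
        refine integral_mono ((i1 t ht).sub (i1 s hs))
          (((iw.const_mul _).add (iwx.const_mul _)).add
            ((h.integrable_normSq_wx ht c).const_mul _)) fun x => ?_
        have e1 := mul_le_mul_of_nonneg_left (normSq_sub_le (w t x) (w s x))
          (by positivity : 0 ≤ ‖a‖ ^ 2 + 2)
        have e2 := mul_le_mul_of_nonneg_left (normSq_sub_le (wx t x) (wx s x)) hs.1
        simp only
        linarith
    _ = 2 * (‖a‖ ^ 2 + 2) * ∫ x, inner ℝ (w t x) (w t x - w s x) ∂sechMeasure c
          + 2 * s * ∫ x, inner ℝ (wx t x) (wx t x - wx s x) ∂sechMeasure c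
          + (t - s) * ∫ x, ‖wx t x‖ ^ 2 ∂sechMeasure c := by
        rw [integral_add ((iw.const_mul _).fun_add (iwx.const_mul _))
          ((h.integrable_normSq_wx ht c).const_mul _),
          integral_add (iw.const_mul _) (iwx.const_mul _)]
        simp only [integral_const_mul]
    _ = ∫ x, inner ℝ (multiplier a w wx wxx c s t x) (w t x - w s x) ∂sechMeasure c
        + (t - s) * ∫ x, ‖wx t x‖ ^ 2 ∂sechMeasure c := by
        rw [ibp, ← integral_const_mul, ← integral_const_mul,
          ← integral_add (iw.const_mul _) (it.const_mul _)]
        congr 2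
        ext x
        simp only [multiplier, inner_add_left, inner_sub_left, real_inner_smul_left]

lemma continuousOn_energy (h : IsParabolicSolution a K b w wx wxx F) (c : ℝ) :
    ContinuousOn (energy a w wx c) (Icc 0 1) := by
  set m := 2 * (‖a‖ ^ 2 + 2) * b + 2 * (b + b) with hm
  set κ := m * (‖a‖ * b + K * b) * (sechMeasure c).real univ
    + ∫ x, b ^ 2 ∂sechMeasure c with hκ
  have hb := h.b_nonneg
  have hK := h.K_nonneg
  have hm0 : 0 ≤ m := by positivity
  have hκ0 : 0 ≤ κ := add_nonneg (by positivity) (integral_nonneg fun _ => sq_nonneg b)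
  refine (LipschitzOnWith.of_le_add_mul (NNReal.mk κ hκ0) fun t ht s hs => ?_).continuousOn
  have h1 : ∫ x, inner ℝ (multiplier a w wx wxx c s t x) (w t x - w s x) ∂sechMeasure c
      ≤ m * ((‖a‖ * b + K * b) * |t - s|) * (sechMeasure c).real univ :=
    (Real.le_norm_self _).trans (norm_integral_le_of_norm_le_const (ae_of_all _ fun x =>
      abs_inner_le (h.norm_multiplier_le hs ht c x) (h.norm_w_sub_le hs ht x)))
  have h2 : ∫ x, ‖wx t x‖ ^ 2 ∂sechMeasure c ≤ ∫ x, b ^ 2 ∂sechMeasure c :=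
    integral_mono (h.integrable_normSq_wx ht c) (integrable_const _) fun x =>
      pow_le_pow_left₀ (norm_nonneg _) (h.norm_wx_le t ht x) 2
  have h3 : (t - s) * ∫ x, ‖wx t x‖ ^ 2 ∂sechMeasure c
      ≤ |t - s| * ∫ x, b ^ 2 ∂sechMeasure c :=
    mul_le_mul (le_abs_self _) h2 (integral_nonneg fun _ => sq_nonneg _) (abs_nonneg _)
  have h4 := h.energy_sub_le hs ht c
  rw [NNReal.coe_mk, Real.dist_eq, hκ]
  linarith

/-- The formal time derivative of the energy is bounded by a multiple of the energy. -/
lemma energy_deriv_le (h : IsParabolicSolution a K b w wx wxx F) {t : ℝ}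
    (ht : t ∈ Icc (0 : ℝ) 1) (c : ℝ) :
    ∫ x, inner ℝ (multiplier a w wx wxx c t t x) (a * wxx t x + F t x) ∂sechMeasure c
        + ∫ x, ‖wx t x‖ ^ 2 ∂sechMeasure c ≤ growthRate a K * energy a w wx c t := by
  have hb := h.b_nonneg
  have hba : ∀ {z : ℂ}, ‖z‖ ≤ b → ‖a * z‖ ≤ ‖a‖ * b := fun hz => by
    rw [norm_mul]
    exact mul_le_mul_of_nonneg_left hz (norm_nonneg _)
  have l1 : b ≤ b + ‖a‖ * b := by linarith [mul_nonneg (norm_nonneg a) hb]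
  have l2 : ‖a‖ * b ≤ b + ‖a‖ * b := by linarith
  have cw := h.continuous_w ht
  have cwx := h.continuous_wx ht
  have cwxx := h.continuous_wxx t ht
  have cwt : Continuous fun x => a * wxx t x + F t x :=
    (cwxx.const_mul a).add (h.continuous_F t ht)
  have cax : Continuous fun x => a * wx t x := cwx.const_mul a
  have caxx : Continuous fun x => a * wxx t x := cwxx.const_mul a
  have ibp := integral_inner_deriv_sechMeasure c (b := b + ‖a‖ * b) (h.hasDerivAt_w t ht)
    (fun x => (h.hasDerivAt_wx t ht x).const_mul a) cwx caxx
    (fun x => (h.norm_w_le t ht x).trans l1) (fun x => (h.norm_wx_le t ht x).trans l1)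
    (fun x => (hba (h.norm_wx_le t ht x)).trans l2)
    (fun x => (hba (h.norm_wxx_le t ht x)).trans l2)
  have im := h.integrable_inner_multiplier ht ht c cwt (h.norm_time_deriv_le ht)
  have ix := h.integrable_normSq_wx ht c
  have iwa : Integrable (fun x => inner ℝ (w t x) (a * wxx t x)) (sechMeasure c) :=
    integrable_inner cw caxx (h.norm_w_le t ht) fun x => hba (h.norm_wxx_le t ht x)
  have it : Integrable (fun x => Real.tanh (x - c) * inner ℝ (w t x) (a * wx t x)
      - inner ℝ (wx t x) (a * wx t x)) (sechMeasure c) := by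
    refine Integrable.sub ?_
      (integrable_inner cwx cax (h.norm_wx_le t ht) fun x => hba (h.norm_wx_le t ht x))
    exact (integrable_inner cw cax (h.norm_w_le t ht) fun x => hba (h.norm_wx_le t ht x)).bdd_mul
      (continuous_tanh_sub c).aestronglyMeasurable (ae_of_all _ fun x => abs_tanh_le_one _)
  have swap : ∫ x, inner ℝ (multiplier a w wx wxx c t t x) (a * wxx t x + F t x) ∂sechMeasure c
      + ∫ x, ‖wx t x‖ ^ 2 ∂sechMeasure c =
      ∫ x, (inner ℝ (multiplier a w wx wxx c t t x) (a * wxx t x + F t x) + ‖wx t x‖ ^ 2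
        - 2 * (‖a‖ ^ 2 + 2) * inner ℝ (w t x) (a * wxx t x)
        + 2 * (‖a‖ ^ 2 + 2) * (Real.tanh (x - c) * inner ℝ (w t x) (a * wx t x)
          - inner ℝ (wx t x) (a * wx t x))) ∂sechMeasure c := by
    have is : Integrable (fun x => inner ℝ (multiplier a w wx wxx c t t x) (a * wxx t x + F t x)
        + ‖wx t x‖ ^ 2 - 2 * (‖a‖ ^ 2 + 2) * inner ℝ (w t x) (a * wxx t x)) (sechMeasure c) :=
      (im.add ix).sub (iwa.const_mul _)
    rw [integral_add is (it.const_mul _),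
      integral_sub (im.fun_add ix) (iwa.const_mul _), integral_add im ix,
      integral_const_mul, integral_const_mul, ibp]
    ring
  rw [swap, energy, ← integral_const_mul]
  refine integral_mono (((im.add ix).sub (iwa.const_mul _)).add (it.const_mul _))
    ((((h.integrable_normSq_w ht c).const_mul _).add (ix.const_mul _)).const_mul _) fun x => ?_
  refine le_trans (le_of_eq ?_) (energy_density_le h.re_eq_one h.K_nonneg ht
    (abs_tanh_le_one (x - c)) (h.norm_F_le t ht x) (wx := wx t x) (wxx := wxx t x))
  simp only [multiplier, inner_add_left, real_inner_smul_left]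
  rw [inner_add_right (w t x)]
  ring

lemma tendsto_integral_slope (h : IsParabolicSolution a K b w wx wxx F) {t : ℝ}
    (ht : t ∈ Ioc (0 : ℝ) 1) (c : ℝ) :
    Tendsto (fun s => ∫ x, inner ℝ (multiplier a w wx wxx c s t x)
        (slope (fun r => w r x) t s) ∂sechMeasure c) (𝓝[<] t)
      (𝓝 (∫ x, inner ℝ (multiplier a w wx wxx c t t x) (a * wxx t x + F t x) ∂sechMeasure c)) := by
  have ht' : t ∈ Icc (0 : ℝ) 1 := ⟨ht.1.le, ht.2⟩
  have hev : ∀ᶠ s in 𝓝[<] t, s ∈ Icc (0 : ℝ) 1 ∧ s < t := by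
    filter_upwards [Ioo_mem_nhdsLT ht.1] with s hs
    exact ⟨⟨hs.1.le, hs.2.le.trans ht.2⟩, hs.2⟩
  refine tendsto_integral_filter_of_dominated_convergence
    (fun _ => (2 * (‖a‖ ^ 2 + 2) * b + 2 * (b + b)) * (‖a‖ * b + K * b)) ?_ ?_
    (integrable_const _) (ae_of_all _ fun x => ?_)
  · filter_upwards [hev] with s hs
    refine ((h.continuous_multiplier ht' c s).inner ?_).aestronglyMeasurable
    exact ((h.continuous_w hs.1).sub (h.continuous_w ht')).const_smul (s - t)⁻¹
  · filter_upwards [hev] with s hs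
    refine ae_of_all _ fun x => abs_inner_le (h.norm_multiplier_le hs.1 ht' c x) ?_
    have hpos : 0 < |s - t| := abs_pos.2 (sub_ne_zero.2 hs.2.ne)
    rw [slope_def_module, norm_smul, norm_inv, Real.norm_eq_abs, inv_mul_le_iff₀ hpos, mul_comm]
    exact h.norm_w_sub_le ht' hs.1 x
  · have hmul : Tendsto (fun s => multiplier a w wx wxx c s t x) (𝓝[<] t)
        (𝓝 (multiplier a w wx wxx c t t x)) := by
      refine (Continuous.tendsto ?_ t).mono_left nhdsWithin_le_nhds
      unfold multiplier
      fun_prop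
    refine hmul.inner ?_
    refine (hasDerivWithinAt_iff_tendsto_slope.1 (h.hasDerivWithinAt t ht' x)).mono_left ?_
    rw [nhdsWithin_le_iff]
    filter_upwards [hev] with s hs
    exact ⟨hs.1, hs.2.ne⟩

/-- Grönwall estimate for the energy. -/
lemma energy_one_le (h : IsParabolicSolution a K b w wx wxx F) (c : ℝ) :
    energy a w wx c 1 ≤ Real.exp (growthRate a K) * energy a w wx c 0 := by
  have hmaps : MapsTo (fun τ : ℝ => 1 - τ) (Icc 0 1) (Icc 0 1) := fun τ hτ =>
    ⟨by linarith [hτ.2], by linarith [hτ.1]⟩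
  have hcont : ContinuousOn (fun τ => -energy a w wx c (1 - τ)) (Icc 0 1) :=
    ((h.continuousOn_energy c).comp (by fun_prop) hmaps).neg
  have key := le_gronwallBound_of_liminf_deriv_right_le (K := -growthRate a K) (ε := 0)
    (f' := fun τ => growthRate a K * energy a w wx c (1 - τ)) hcont ?_ le_rfl
    (fun τ _ => by linarith) 1 (right_mem_Icc.2 zero_le_one)
  · rw [gronwallBound_ε0] at key
    simp only [sub_self, sub_zero, mul_one, Real.exp_neg] at key
    have hpos := Real.exp_pos (growthRate a K)
    have := mul_le_mul_of_nonneg_left key hpos.le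
    rw [mul_comm _ (_ * _), mul_assoc, inv_mul_cancel₀ hpos.ne'] at this
    linarith
  · intro τ hτ r hr
    set t := 1 - τ with ht_def
    have ht : t ∈ Ioc (0 : ℝ) 1 := ⟨by linarith [hτ.2], by linarith [hτ.1]⟩
    have ht' : t ∈ Icc (0 : ℝ) 1 := ⟨ht.1.le, ht.2⟩
    have hlim := (h.tendsto_integral_slope ht c).add_const (∫ x, ‖wx t x‖ ^ 2 ∂sechMeasure c)
    have hlt := hlim.eventually_lt_const ((h.energy_deriv_le ht' c).trans_lt hr)
    have hmap : Tendsto (fun z : ℝ => 1 - z) (𝓝[>] τ) (𝓝[<] t) := by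
      refine tendsto_nhdsWithin_iff.2 ⟨?_, ?_⟩
      · exact ((continuous_const.sub continuous_id).tendsto τ).mono_left nhdsWithin_le_nhds
      · filter_upwards [self_mem_nhdsWithin] with z hz
        exact sub_lt_sub_left (mem_Ioi.1 hz) (1 : ℝ)
    refine Eventually.frequently ?_
    filter_upwards [hmap.eventually hlt, hmap.eventually (Ioo_mem_nhdsLT ht.1)] with z hz hz'
    set s := 1 - z with hs_def
    have hs : s ∈ Icc (0 : ℝ) 1 := ⟨hz'.1.le, hz'.2.le.trans ht.2⟩
    have hpos : 0 < t - s := sub_pos.2 hz'.2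
    have hzτ : z - τ = t - s := by rw [ht_def, hs_def]; ring
    refine lt_of_le_of_lt ?_ hz
    rw [hzτ, inv_mul_le_iff₀ hpos, mul_add, ← integral_const_mul]
    refine le_trans (by linarith) (h.energy_sub_le hs ht' c |>.trans (le_of_eq ?_))
    congr 2
    ext x
    rw [← real_inner_smul_right, slope_comm, slope_def_module, smul_smul, mul_inv_cancel₀ hpos.ne',
      one_smul]

lemma integral_normSq_one_le (h : IsParabolicSolution a K b w wx wxx F) (c : ℝ) :
    ∫ x, ‖w 1 x‖ ^ 2 ∂sechMeasure c + ∫ x, ‖wx 1 x‖ ^ 2 ∂sechMeasure c ≤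
      Real.exp (growthRate a K) * ((‖a‖ ^ 2 + 2) * ∫ x, ‖w 0 x‖ ^ 2 ∂sechMeasure c) := by
  have h1 : (1 : ℝ) ∈ Icc (0 : ℝ) 1 := right_mem_Icc.2 zero_le_one
  have e := h.energy_one_le c
  have e0 : energy a w wx c 0 = (‖a‖ ^ 2 + 2) * ∫ x, ‖w 0 x‖ ^ 2 ∂sechMeasure c := by
    simp [energy, integral_const_mul]
  rw [← e0]
  refine le_trans ?_ e
  rw [← integral_add (h.integrable_normSq_w h1 c) (h.integrable_normSq_wx h1 c)]
  refine integral_mono ((h.integrable_normSq_w h1 c).add (h.integrable_normSq_wx h1 c))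
    (((h.integrable_normSq_w h1 c).const_mul _).add ((h.integrable_normSq_wx h1 c).const_mul _))
    fun x => ?_
  have : 0 ≤ (‖a‖ ^ 2 + 1) * ‖w 1 x‖ ^ 2 := by positivity
  simp only
  linarith

end IsParabolicSolution

/-! ### Differences of Ginzburg–Landau solutions -/

/-- Lipschitz constant of the reaction term `u ↦ u - (1 + iβ) |u|^{2q} u` on the ball of
radius `R`. -/
def reactionConst (q β R : ℝ) : ℝ :=
  1 + ‖1 + Complex.I * (β : ℂ)‖ * (R ^ (2 * q) + 2 * q * R ^ (2 * q - 1) * R)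

lemma abs_rpow_sub_rpow_le {p R x y : ℝ} (hp : 1 ≤ p) (hx : x ∈ Icc 0 R) (hy : y ∈ Icc 0 R) :
    |x ^ p - y ^ p| ≤ p * R ^ (p - 1) * |x - y| := by
  refine (convex_Icc (0 : ℝ) R).norm_image_sub_le_of_norm_hasDerivWithin_le
    (f := fun z : ℝ => z ^ p) (fun z _ => (Real.hasDerivAt_rpow_const (.inr hp)).hasDerivWithinAt)
    (fun z hz => ?_) hy hx
  rw [Real.norm_of_nonneg (mul_nonneg (by linarith) (Real.rpow_nonneg hz.1 _))]
  exact mul_le_mul_of_nonneg_left (Real.rpow_le_rpow hz.1 hz.2 (by linarith)) (by linarith)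

lemma norm_rpow_mul_sub_le {p R : ℝ} (hp : 1 ≤ p) {y z : ℂ} (hy : ‖y‖ ≤ R) (hz : ‖z‖ ≤ R) :
    ‖((‖y‖ ^ p : ℝ) : ℂ) * y - ((‖z‖ ^ p : ℝ) : ℂ) * z‖ ≤
      (R ^ p + p * R ^ (p - 1) * R) * ‖y - z‖ := by
  have hR : 0 ≤ R := (norm_nonneg _).trans hy
  have e : ((‖y‖ ^ p : ℝ) : ℂ) * y - ((‖z‖ ^ p : ℝ) : ℂ) * z =
      ((‖y‖ ^ p : ℝ) : ℂ) * (y - z) + ((‖y‖ ^ p - ‖z‖ ^ p : ℝ) : ℂ) * z := by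
    push_cast
    ring
  rw [e, add_mul]
  refine (norm_add_le _ _).trans (add_le_add ?_ ?_)
  · rw [norm_mul, Complex.norm_real, Real.norm_of_nonneg (by positivity)]
    gcongr
  · rw [norm_mul, Complex.norm_real, Real.norm_eq_abs]
    calc |‖y‖ ^ p - ‖z‖ ^ p| * ‖z‖ ≤ p * R ^ (p - 1) * ‖y - z‖ * R := by
          refine mul_le_mul ?_ hz (norm_nonneg _) (by positivity)
          refine (abs_rpow_sub_rpow_le hp ⟨norm_nonneg _, hy⟩ ⟨norm_nonneg _, hz⟩).trans ?_
          exact mul_le_mul_of_nonneg_left (abs_norm_sub_norm_le _ _) (by positivity)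
      _ = p * R ^ (p - 1) * R * ‖y - z‖ := by ring

/-- The difference of two Ginzburg–Landau solutions with the same forcing solves a linear
parabolic equation. -/
lemma exists_isParabolicSolution_sub {q α β R : ℝ} (hq : 1 / 2 < q) {g u v : ℝ → ℝ → ℂ}
    (hu : IsGLSolution1D q α β g u) (hv : IsGLSolution1D q α β g v)
    (bu : ∀ x : ℝ, ∀ t ∈ Icc (0 : ℝ) 1, ‖u x t‖ ≤ R)
    (bv : ∀ x : ℝ, ∀ t ∈ Icc (0 : ℝ) 1, ‖v x t‖ ≤ R) :
    ∃ b : ℝ, ∃ wx wxx F : ℝ → ℝ → ℂ, IsParabolicSolution (1 + Complex.I * (α : ℂ))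
      (reactionConst q β R) b (fun t x => u x t - v x t) wx wxx F := by
  obtain ⟨-, u2, ⟨Bu, hBu⟩, ut⟩ := hu
  obtain ⟨-, v2, ⟨Bv, hBv⟩, vt⟩ := hv
  have hR : 0 ≤ R := (norm_nonneg _).trans (bu 0 0 (left_mem_Icc.2 zero_le_one))
  have d1 : ∀ {f : ℝ → ℂ}, ContDiff ℝ 2 f → ∀ x, HasDerivAt f (deriv f x) x := fun hf x =>
    (hf.differentiable (by norm_num) x).hasDerivAt
  have cd : ∀ {f : ℝ → ℂ}, ContDiff ℝ 2 f → ContDiff ℝ 1 (deriv f) := fun hf =>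
    (contDiff_succ_iff_deriv (n := 1)).1 (by simpa [one_add_one_eq_two] using hf) |>.2.2
  have d2 : ∀ {f : ℝ → ℂ}, ContDiff ℝ 2 f → ∀ x, HasDerivAt (deriv f) (deriv (deriv f) x) x :=
    fun hf x => ((cd hf).differentiable (by norm_num) x).hasDerivAt
  have c2 : ∀ {f : ℝ → ℂ}, ContDiff ℝ 2 f → Continuous (deriv (deriv f)) := fun hf =>
    (cd hf).continuous_deriv le_rfl
  have cr : ∀ {f : ℝ → ℂ}, Continuous f →
      Continuous fun x => ((‖f x‖ ^ (2 * q) : ℝ) : ℂ) * f x := fun hf =>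
    (Complex.continuous_ofReal.comp
      (hf.norm.rpow_const fun x => .inr (by linarith))).mul hf
  refine ⟨Bu + Bv, fun t x => deriv (fun y => u y t) x - deriv (fun y => v y t) x,
    fun t x => deriv (deriv fun y => u y t) x - deriv (deriv fun y => v y t) x,
    fun t x => (u x t - v x t) - (1 + Complex.I * (β : ℂ)) *
      (((‖u x t‖ ^ (2 * q) : ℝ) : ℂ) * u x t - ((‖v x t‖ ^ (2 * q) : ℝ) : ℂ) * v x t), ?_⟩
  constructor
  · simp
  · have : 0 ≤ 2 * q := by linarith
    unfold reactionConst
    positivity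
  · exact fun t ht x => (d1 (u2 t ht) x).sub (d1 (v2 t ht) x)
  · exact fun t ht x => (d2 (u2 t ht) x).sub (d2 (v2 t ht) x)
  · exact fun t ht => (c2 (u2 t ht)).sub (c2 (v2 t ht))
  · exact fun t ht => ((u2 t ht).continuous.sub (v2 t ht).continuous).sub
      (continuous_const.mul ((cr (u2 t ht).continuous).sub (cr (v2 t ht).continuous)))
  · exact fun t ht x => (norm_sub_le _ _).trans (add_le_add (hBu t ht x).1 (hBv t ht x).1)
  · exact fun t ht x => (norm_sub_le _ _).trans (add_le_add (hBu t ht x).2.1 (hBv t ht x).2.1)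
  · exact fun t ht x => (norm_sub_le _ _).trans (add_le_add (hBu t ht x).2.2 (hBv t ht x).2.2)
  · intro t ht x
    refine (norm_sub_le _ _).trans ?_
    rw [norm_mul, reactionConst, add_mul, one_mul, mul_assoc]
    gcongr
    exact norm_rpow_mul_sub_le (by linarith) (bu x t ht) (bv x t ht)
  · intro t ht x
    refine ((ut x t ht).sub (vt x t ht)).congr_deriv ?_
    ring

/-- Weighted size of the initial difference. -/
lemma integral_normSq_sechMeasure_le {f : ℝ → ℂ} (hf : Continuous f) {c ε R : ℝ}
    (hε : 0 < ε) (hfR : ∀ x, ‖f x‖ ≤ 2 * R)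
    (hfε : ∀ x, |x - c| ≤ 4 * Real.log (1 / ε) → ‖f x‖ ≤ 2 * ε) :
    ∫ x, ‖f x‖ ^ 2 ∂sechMeasure c ≤
      8 * (1 + R ^ 2) * (∫ x : ℝ, Real.exp (-(|x| / 2))) * ε ^ 2 := by
  rw [integral_sechMeasure,
    ← integral_sub_right_eq_self (fun x : ℝ => Real.exp (-(|x| / 2))) c]
  calc ∫ x, sechWeight c x * ‖f x‖ ^ 2
      ≤ ∫ x, 8 * (1 + R ^ 2) * ε ^ 2 * Real.exp (-(|x - c| / 2)) := by
        refine integral_mono (integrable_sechWeight_mul c (hf.norm.pow 2) (b := (2 * R) ^ 2)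
          fun x => ?_) ((integrable_exp_neg_half_abs_sub c).const_mul _) fun x => ?_
        · rw [abs_of_nonneg (by positivity)]
          exact pow_le_pow_left₀ (norm_nonneg _) (hfR x) 2
        · have hsplit : Real.exp (-|x - c|) =
              Real.exp (-(|x - c| / 2)) * Real.exp (-(|x - c| / 2)) := by
            rw [← Real.exp_add]
            ring_nf
          have hw := sechWeight_le c x
          rw [hsplit] at hw
          have he := Real.exp_pos (-(|x - c| / 2))
          have hdecay : Real.exp (-(|x - c| / 2)) * ‖f x‖ ^ 2 ≤ 4 * (1 + R ^ 2) * ε ^ 2 := by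
            rcases le_or_gt |x - c| (4 * Real.log (1 / ε)) with hx | hx
            · have h1 : Real.exp (-(|x - c| / 2)) ≤ 1 :=
                Real.exp_le_one_iff.2 (by linarith [abs_nonneg (x - c)])
              have h2 := pow_le_pow_left₀ (norm_nonneg _) (hfε x hx) 2
              have h3 := mul_le_mul h1 h2 (by positivity) zero_le_one
              have : 0 ≤ R ^ 2 * ε ^ 2 := by positivity
              nlinarith
            · have h1 : Real.exp (-(|x - c| / 2)) ≤ ε ^ 2 := by
                rw [one_div, Real.log_inv] at hx
                rw [← Real.exp_log (pow_pos hε 2), Real.log_pow]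
                refine Real.exp_le_exp.2 ?_
                push_cast
                linarith
              have h2 := pow_le_pow_left₀ (norm_nonneg _) (hfR x) 2
              have h3 := mul_le_mul h1 h2 (by positivity) (by positivity)
              nlinarith [sq_nonneg ε]
          calc sechWeight c x * ‖f x‖ ^ 2
              ≤ 2 * (Real.exp (-(|x - c| / 2)) * Real.exp (-(|x - c| / 2))) * ‖f x‖ ^ 2 :=
                mul_le_mul_of_nonneg_right hw (by positivity)
            _ = 2 * Real.exp (-(|x - c| / 2)) * (Real.exp (-(|x - c| / 2)) * ‖f x‖ ^ 2) := by ring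
            _ ≤ 2 * Real.exp (-(|x - c| / 2)) * (4 * (1 + R ^ 2) * ε ^ 2) :=
                mul_le_mul_of_nonneg_left hdecay (by positivity)
            _ = 8 * (1 + R ^ 2) * ε ^ 2 * Real.exp (-(|x - c| / 2)) := by ring
    _ = _ := by
        rw [integral_const_mul]
        ring

/-- On `[c, c + 1]` the weight is bounded below by `1 / cosh 1`. -/
lemma intervalIntegral_le_cosh_mul {f : ℝ → ℝ} (hf : Continuous f) (hf0 : ∀ x, 0 ≤ f x) {b : ℝ}
    (hb : ∀ x, f x ≤ b) (c : ℝ) :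
    ∫ x in c..c + 1, f x ≤ Real.cosh 1 * ∫ x, f x ∂sechMeasure c := by
  have hi : Integrable fun x => sechWeight c x * f x :=
    integrable_sechWeight_mul c hf fun x => by rw [abs_of_nonneg (hf0 x)]; exact hb x
  have hle : ∀ x ∈ Icc c (c + 1), f x ≤ Real.cosh 1 * (sechWeight c x * f x) := fun x hx => by
    have h1 : Real.cosh (x - c) ≤ Real.cosh 1 :=
      Real.cosh_le_cosh.2 (by
        rw [abs_one, abs_of_nonneg (by linarith [hx.1])]
        linarith [hx.2])
    have h2 : 1 ≤ Real.cosh 1 * sechWeight c x := by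
      rw [sechWeight, ← div_eq_mul_inv, one_le_div (Real.cosh_pos _)]
      exact h1
    nlinarith [hf0 x]
  calc ∫ x in c..c + 1, f x
      ≤ ∫ x in c..c + 1, Real.cosh 1 * (sechWeight c x * f x) :=
        intervalIntegral.integral_mono_on (by linarith) (hf.intervalIntegrable _ _)
          (hi.const_mul _).intervalIntegrable hle
    _ ≤ ∫ x, Real.cosh 1 * (sechWeight c x * f x) := by
        rw [intervalIntegral.integral_of_le (by linarith)]
        exact setIntegral_le_integral (hi.const_mul _) (ae_of_all _ fun x =>
          mul_nonneg (Real.cosh_pos _).le (mul_nonneg (sechWeight_pos _ _).le (hf0 x)))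
    _ = Real.cosh 1 * ∫ x, f x ∂sechMeasure c := by
        rw [integral_const_mul, integral_sechMeasure]

/-! ### From energy bounds to pointwise bounds -/

lemma norm_sub_le_of_integral_normSq_deriv_le {f f' : ℝ → ℂ} (hf : ∀ x, HasDerivAt f (f' x) x)
    (hf' : Continuous f') {c ε κ D : ℝ} (hε : 0 < ε) (hκ : 0 < κ)
    (hD : ∫ x in c..c + 1, ‖f' x‖ ^ 2 ≤ D * ε ^ 2) {x : ℝ} (hx : x ∈ Icc c (c + 1)) :
    ‖f x - f c‖ ≤ κ * D * ε / 2 + (x - c) * ε / (2 * κ) := by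
  have hyoung : ∀ y, ‖f' y‖ ≤ κ / (2 * ε) * ‖f' y‖ ^ 2 + ε / (2 * κ) := fun y => by
    have e : κ / (2 * ε) * ‖f' y‖ ^ 2 + ε / (2 * κ) - ‖f' y‖ =
        (κ * ‖f' y‖ - ε) ^ 2 / (2 * ε * κ) := by
      field_simp
      ring
    linarith [show 0 ≤ (κ * ‖f' y‖ - ε) ^ 2 / (2 * ε * κ) by positivity]
  have hi : ∀ a b, IntervalIntegrable (fun y => ‖f' y‖ ^ 2) volume a b := fun a b =>
    (hf'.norm.pow 2).intervalIntegrable a b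
  have hmono : ∫ y in c..x, ‖f' y‖ ^ 2 ≤ ∫ y in c..c + 1, ‖f' y‖ ^ 2 :=
    intervalIntegral.integral_mono_interval le_rfl hx.1 hx.2
      (ae_of_all _ fun _ => sq_nonneg _) (hi _ _)
  rw [← intervalIntegral.integral_eq_sub_of_hasDerivAt (fun y _ => hf y)
    (hf'.intervalIntegrable _ _)]
  calc ‖∫ y in c..x, f' y‖ ≤ ∫ y in c..x, ‖f' y‖ :=
        intervalIntegral.norm_integral_le_integral_norm hx.1
    _ ≤ ∫ y in c..x, (κ / (2 * ε) * ‖f' y‖ ^ 2 + ε / (2 * κ)) :=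
        intervalIntegral.integral_mono_on hx.1 (hf'.norm.intervalIntegrable _ _)
          (((hi _ _).const_mul _).add intervalIntegrable_const) fun y _ => hyoung y
    _ = κ / (2 * ε) * (∫ y in c..x, ‖f' y‖ ^ 2) + (x - c) * ε / (2 * κ) := by
        rw [intervalIntegral.integral_add ((hi _ _).const_mul _) intervalIntegrable_const,
          intervalIntegral.integral_const_mul, intervalIntegral.integral_const, smul_eq_mul]
        ring
    _ ≤ κ / (2 * ε) * (D * ε ^ 2) + (x - c) * ε / (2 * κ) := by
        gcongr
        exact hmono.trans hD
    _ = κ * D * ε / 2 + (x - c) * ε / (2 * κ) := by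
        field_simp

lemma norm_le_of_integral_normSq_le {f f' : ℝ → ℂ} (hf : ∀ x, HasDerivAt f (f' x) x)
    (hf' : Continuous f') {c ε D : ℝ} (hε : 0 < ε)
    (hD : ∫ x in c..c + 1, ‖f x‖ ^ 2 ≤ D * ε ^ 2)
    (hD' : ∫ x in c..c + 1, ‖f' x‖ ^ 2 ≤ D * ε ^ 2) :
    ‖f c‖ ≤ (D + 1) * ε := by
  have cf : Continuous f := continuous_iff_continuousAt.2 fun x => (hf x).continuousAt
  have hi : IntervalIntegrable (fun y => ‖f y‖ ^ 2) volume c (c + 1) :=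
    (cf.norm.pow 2).intervalIntegrable _ _
  have hpt : ∀ x ∈ Icc c (c + 1),
      ‖f c‖ ≤ (2 * ε)⁻¹ * ‖f x‖ ^ 2 + (ε + D * ε / 2) := fun x hx => by
    have h1 := norm_sub_le_of_integral_normSq_deriv_le hf hf' hε one_pos hD' hx
    have h2 : ‖f c‖ ≤ ‖f x‖ + ‖f x - f c‖ := by
      rw [← norm_neg (f x - f c), neg_sub]
      exact norm_le_norm_add_norm_sub' _ _
    have h3 : (x - c) * ε / (2 * 1) ≤ ε / 2 := by nlinarith [hx.2]
    have h4 : (2 * ε)⁻¹ * ‖f x‖ ^ 2 + ε / 2 - ‖f x‖ = (‖f x‖ - ε) ^ 2 / (2 * ε) := by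
      field_simp
      ring
    have h5 : 0 ≤ (‖f x‖ - ε) ^ 2 / (2 * ε) := by positivity
    linarith
  have h := intervalIntegral.integral_mono_on (by linarith) intervalIntegrable_const
    ((hi.const_mul _).add intervalIntegrable_const) hpt
  rw [intervalIntegral.integral_const, intervalIntegral.integral_add (hi.const_mul _)
    intervalIntegrable_const, intervalIntegral.integral_const_mul,
    intervalIntegral.integral_const, add_sub_cancel_left, one_smul, one_smul] at h
  have h6 : (2 * ε)⁻¹ * (∫ x in c..c + 1, ‖f x‖ ^ 2) ≤ (2 * ε)⁻¹ * (D * ε ^ 2) := by gcongr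
  have h7 : (2 * ε)⁻¹ * (D * ε ^ 2) = D * ε / 2 := by field_simp
  linarith

/-- Smoothing estimate: if two solutions are `2ε`-close at time zero near `c`, then at time one
their difference is of size `O(ε)` at `c` and oscillates by at most `ε / 4` to the right of `c`,
on a length that does not depend on `ε`. -/
lemma exists_smoothing_const {q : ℝ} (hq : 1 / 2 < q) (α β R : ℝ) :
    ∃ D : ℝ, 0 ≤ D ∧ ∀ (ε : ℝ) (g u v : ℝ → ℝ → ℂ) (c : ℝ), 0 < ε →
      IsGLSolution1D q α β g u → IsGLSolution1D q α β g v →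
      (∀ x : ℝ, ∀ t ∈ Icc (0 : ℝ) 1, ‖u x t‖ ≤ R) →
      (∀ x : ℝ, ∀ t ∈ Icc (0 : ℝ) 1, ‖v x t‖ ≤ R) →
      (∀ x, |x - c| ≤ 4 * Real.log (1 / ε) → ‖u x 0 - v x 0‖ ≤ 2 * ε) →
      ‖u c 1 - v c 1‖ ≤ (D + 1) * ε ∧
      ∀ x ∈ Icc c (c + 1 / (16 * (D + 1))),
        ‖(u x 1 - v x 1) - (u c 1 - v c 1)‖ ≤ ε / 4 := by
  set a : ℂ := 1 + Complex.I * (α : ℂ)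
  set Γ := Real.exp (growthRate a (reactionConst q β R))
  set J := ∫ x : ℝ, Real.exp (-(|x| / 2))
  set D := Real.cosh 1 * (Γ * ((‖a‖ ^ 2 + 2) * (8 * (1 + R ^ 2) * J))) with hD
  have hJ0 : 0 ≤ J := integral_nonneg fun x => (Real.exp_pos _).le
  have hΓ0 : 0 < Γ := Real.exp_pos _
  have hcosh := Real.cosh_pos 1
  have hD0 : 0 ≤ D := by positivity
  refine ⟨D, hD0, fun ε g u v c hε hu hv bu bv h0 => ?_⟩
  obtain ⟨b, wx, wxx, F, h⟩ := exists_isParabolicSolution_sub hq hu hv bu bv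
  have m0 : (0 : ℝ) ∈ Icc (0 : ℝ) 1 := left_mem_Icc.2 zero_le_one
  have m1 : (1 : ℝ) ∈ Icc (0 : ℝ) 1 := right_mem_Icc.2 zero_le_one
  have hzero := integral_normSq_sechMeasure_le (h.continuous_w m0) hε
    (fun x => (norm_sub_le _ _).trans ((add_le_add (bu x 0 m0) (bv x 0 m0)).trans
      (two_mul R).ge)) h0
  have hmain : Real.cosh 1 * (∫ x, ‖u x 1 - v x 1‖ ^ 2 ∂sechMeasure c
      + ∫ x, ‖wx 1 x‖ ^ 2 ∂sechMeasure c) ≤ D * ε ^ 2 := by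
    have e := h.integral_normSq_one_le c
    calc _ ≤ Real.cosh 1 * (Γ * ((‖a‖ ^ 2 + 2) * (8 * (1 + R ^ 2) * J * ε ^ 2))) := by
          refine mul_le_mul_of_nonneg_left (e.trans ?_) hcosh.le
          gcongr
      _ = D * ε ^ 2 := by rw [hD]; ring
  rw [mul_add] at hmain
  have pos : ∀ f : ℝ → ℂ, 0 ≤ Real.cosh 1 * ∫ x, ‖f x‖ ^ 2 ∂sechMeasure c := fun f =>
    mul_nonneg hcosh.le (integral_nonneg fun _ => sq_nonneg _)
  have hw : ∫ x in c..c + 1, ‖u x 1 - v x 1‖ ^ 2 ≤ D * ε ^ 2 :=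
    (intervalIntegral_le_cosh_mul (f := fun x => ‖u x 1 - v x 1‖ ^ 2)
      ((h.continuous_w m1).norm.pow 2) (fun _ => sq_nonneg _)
      (fun x => pow_le_pow_left₀ (norm_nonneg _) (h.norm_w_le 1 m1 x) 2) c).trans
      (by linarith [pos (wx 1)])
  have hwx : ∫ x in c..c + 1, ‖wx 1 x‖ ^ 2 ≤ D * ε ^ 2 :=
    (intervalIntegral_le_cosh_mul (f := fun x => ‖wx 1 x‖ ^ 2)
      ((h.continuous_wx m1).norm.pow 2) (fun _ => sq_nonneg _)
      (fun x => pow_le_pow_left₀ (norm_nonneg _) (h.norm_wx_le 1 m1 x) 2) c).trans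
      (by linarith [pos fun x => u x 1 - v x 1])
  refine ⟨norm_le_of_integral_normSq_le (h.hasDerivAt_w 1 m1) (h.continuous_wx m1) hε hw hwx,
    fun x hx => ?_⟩
  have hD1 : 0 < D + 1 := by linarith
  have hδ : 1 / (16 * (D + 1)) ≤ 1 := by
    rw [div_le_one (by positivity)]
    linarith
  refine (norm_sub_le_of_integral_normSq_deriv_le (h.hasDerivAt_w 1 m1) (h.continuous_wx m1) hε
    (κ := 1 / (4 * (D + 1))) (by positivity) hwx ⟨hx.1, by linarith [hx.2]⟩).trans ?_
  have e1 : 1 / (4 * (D + 1)) * D * ε / 2 ≤ ε / 8 := by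
    have : 1 / (4 * (D + 1)) * D * ε / 2 = ε / 8 * (D / (D + 1)) := by
      field_simp
      ring
    rw [this]
    exact mul_le_of_le_one_right (by positivity) ((div_le_one hD1).2 (by linarith))
  have e2 : (x - c) * ε / (2 * (1 / (4 * (D + 1)))) ≤ ε / 8 := by
    have hxc : x - c ≤ 1 / (16 * (D + 1)) := by linarith [hx.2]
    calc (x - c) * ε / (2 * (1 / (4 * (D + 1))))
        ≤ 1 / (16 * (D + 1)) * ε / (2 * (1 / (4 * (D + 1)))) := by gcongr
      _ = ε / 8 := by
        field_simp
        norm_num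
  linarith

/-! ### Covering -/

/-- A ball in `ℂ` can be coloured with finitely many colours so that points of equal colour are
close. -/
lemma exists_finite_coloring {r : ℝ} (hr : 0 ≤ r) :
    ∃ (n : ℕ) (col : ℂ → Fin n), ∀ y z, ‖y‖ ≤ r → ‖z‖ ≤ r → col y = col z →
      ‖y - z‖ ≤ 1 / 4 := by
  obtain ⟨s, -, hs, hcov⟩ := (isCompact_closedBall (0 : ℂ) r).finite_cover_balls
    (show (0 : ℝ) < 1 / 8 by norm_num)
  have hmem : ∀ z : ℂ, ‖z‖ ≤ r → ∃ p : s, dist z p < 1 / 8 := fun z hz => by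
    have := hcov (mem_closedBall_zero_iff.2 hz)
    simp only [mem_iUnion, Metric.mem_ball] at this
    obtain ⟨p, hp, hd⟩ := this
    exact ⟨⟨p, hp⟩, hd⟩
  have : Finite s := hs
  obtain ⟨p₀, -⟩ := hmem 0 (by simpa using hr)
  have hex : ∀ z : ℂ, ∃ p : s, ‖z‖ ≤ r → dist z p < 1 / 8 := fun z => by
    by_cases hz : ‖z‖ ≤ r
    · exact (hmem z hz).imp fun p hp _ => hp
    · exact ⟨p₀, fun h => absurd h hz⟩
  choose center hcenter using hex
  refine ⟨Nat.card s, fun z => Finite.equivFin s (center z), fun y z hy hz hyz => ?_⟩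
  have hc : center y = center z := (Finite.equivFin s).injective hyz
  have h1 := hcenter y hy
  have h2 := hcenter z hz
  rw [hc] at h1
  rw [← dist_eq_norm]
  linarith [dist_triangle_right y z (center z : ℂ)]

end GinzburgLandauCover

end

/-- Iterative covering bound (Lemma 6.1 of the paper): there are constants `A, B, C`
such that for all sufficiently small `ε > 0` and all `L > 0`, given a family `𝒮` of
classical solutions bounded by `R` with common forcing `g`, if the initial data
`{u(·,0)}` admit a cover by `N` sets of diameter `≤ 2ε` in sup norm on
`[−L''/2, L''/2]` with `L'' = L + C log(1/ε)`, then the time-one states `{u(·,1)}`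
admit a cover by at most `N·A^L·B^{1/ε²}` sets of diameter `≤ ε` in sup norm on
`[−L/2, L/2]`. -/
theorem iterative_cover_bound (q : ℝ) (hq : 1 / 2 < q) (α β : ℝ)
    (hβ : |β| ≤ Real.sqrt (2 * q + 1) / q) (R : ℝ) (hR : 1 < R) :
    ∃ A B C : ℝ, ∃ ε₀ : ℝ, 0 < ε₀ ∧ ∀ ε : ℝ, 0 < ε → ε ≤ ε₀ → ∀ L : ℝ, 0 < L →
      ∀ g : ℝ → ℝ → ℂ, (∃ Mg : ℝ, ∀ x t, ‖g x t‖ ≤ Mg) →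
      ContinuousOn (fun p : ℝ × ℝ => g p.1 p.2) (Set.univ ×ˢ Set.Icc 0 1) →
      ∀ S : Set (ℝ → ℝ → ℂ),
      (∀ u ∈ S, IsGLSolution1D q α β g u) →
      (∀ u ∈ S, ∀ x : ℝ, ∀ t ∈ Set.Icc (0 : ℝ) 1, ‖u x t‖ ≤ R) →
      ∀ N : ℕ,
      (∃ U : Fin N → Set (ℝ → ℂ),
        ((fun u : ℝ → ℝ → ℂ => fun x : ℝ => u x 0) '' S) ⊆ ⋃ i, U i ∧
        ∀ i, ∀ f ∈ U i, ∀ f' ∈ U i, ∀ x : ℝ,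
          |x| ≤ (L + C * Real.log (1 / ε)) / 2 → ‖f x - f' x‖ ≤ 2 * ε) →
      ∃ m : ℕ, (m : ℝ) ≤ (N : ℝ) * A ^ L * B ^ (1 / ε ^ 2) ∧
        ∃ V : Fin m → Set (ℝ → ℂ),
          ((fun u : ℝ → ℝ → ℂ => fun x : ℝ => u x 1) '' S) ⊆ ⋃ i, V i ∧
          ∀ i, ∀ f ∈ V i, ∀ f' ∈ V i, ∀ x : ℝ,
            |x| ≤ L / 2 → ‖f x - f' x‖ ≤ ε := by
  obtain ⟨D, hD, hsmooth⟩ := GinzburgLandauCover.exists_smoothing_const hq α β R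
  obtain ⟨d, col, hcol⟩ := GinzburgLandauCover.exists_finite_coloring
    (show (0 : ℝ) ≤ D + 1 by linarith)
  set δ : ℝ := 1 / (16 * (D + 1))
  have hδ0 : 0 < δ := by positivity
  have hd : (1 : ℝ) ≤ d := by exact_mod_cast (Nat.zero_le _).trans_lt (col 0).isLt
  refine ⟨(d : ℝ) ^ (1 / δ), d, 8, 1, one_pos, ?_⟩
  intro ε hε hε1 L hL g _ _ S hS hSR N ⟨U, hcov, hU⟩
  set n := ⌊L / δ⌋₊
  let p : ℕ → ℝ := fun k => -(L / 2) + k * δ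
  have hp : ∀ k : Fin (n + 1), |p k| ≤ L / 2 := fun k => by
    have h1 : (k : ℝ) ≤ L / δ :=
      (Nat.cast_le.2 (Nat.lt_succ_iff.1 k.isLt)).trans (Nat.floor_le (by positivity))
    have h2 : (k : ℝ) * δ ≤ L := (le_div_iff₀ hδ0).1 h1
    have h3 : 0 ≤ (k : ℝ) * δ := by positivity
    exact abs_le.2 ⟨by simp only [p]; linarith, by simp only [p]; linarith⟩
  have hclose : ∀ i, ∀ u ∈ S, ∀ v ∈ S, (fun x => u x 0) ∈ U i → (fun x => v x 0) ∈ U i →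
      ∀ k : Fin (n + 1), ‖u (p k) 1 - v (p k) 1‖ ≤ (D + 1) * ε ∧
        ∀ x ∈ Set.Icc (p k) (p k + δ),
          ‖(u x 1 - v x 1) - (u (p k) 1 - v (p k) 1)‖ ≤ ε / 4 := by
    intro i u hu v hv hui hvi k
    refine hsmooth ε g u v (p k) hε (hS u hu) (hS v hv) (hSR u hu) (hSR v hv) fun x hx => ?_
    refine hU i _ hui _ hvi x ?_
    have := abs_sub_abs_le_abs_sub x (p k)
    linarith [hp k]
  have href : ∀ i, ∃ v : ℝ → ℝ → ℂ, (∃ u ∈ S, (fun x => u x 0) ∈ U i) →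
      v ∈ S ∧ (fun x => v x 0) ∈ U i := fun i => by
    by_cases h : ∃ u ∈ S, (fun x => u x 0) ∈ U i
    · obtain ⟨u, hu⟩ := h
      exact ⟨u, fun _ => hu⟩
    · exact ⟨0, fun h' => absurd h' h⟩
  choose v hv using href
  let code : Fin N → (ℝ → ℝ → ℂ) → Fin (n + 1) → Fin d := fun i u k =>
    col ((ε⁻¹ : ℝ) • (u (p k) 1 - v i (p k) 1))
  let V : Fin N × (Fin (n + 1) → Fin d) → Set (ℝ → ℂ) := fun j =>
    {f | ∃ u ∈ S, (fun x => u x 0) ∈ U j.1 ∧ code j.1 u = j.2 ∧ f = fun x => u x 1}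
  have hcard : Fintype.card (Fin N × (Fin (n + 1) → Fin d)) = N * d ^ (n + 1) := by simp
  let e := Fintype.equivFinOfCardEq hcard
  refine ⟨N * d ^ (n + 1), ?_, fun j => V (e.symm j), ?_, ?_⟩
  · have h1 : (d : ℝ) ^ n ≤ ((d : ℝ) ^ (1 / δ)) ^ L := by
      rw [← Real.rpow_mul (by positivity), ← Real.rpow_natCast, one_div_mul_eq_div]
      exact Real.rpow_le_rpow_of_exponent_le hd (Nat.floor_le (by positivity))
    have h2 : (d : ℝ) ≤ (d : ℝ) ^ (1 / ε ^ 2) := by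
      refine Real.self_le_rpow_of_one_le hd ?_
      rw [le_div_iff₀ (by positivity), one_mul]
      exact pow_le_one₀ hε.le hε1
    push_cast
    rw [pow_succ, mul_assoc]
    gcongr
  · rintro _ ⟨u, hu, rfl⟩
    obtain ⟨i, hi⟩ := Set.mem_iUnion.1 (hcov ⟨u, hu, rfl⟩)
    refine Set.mem_iUnion.2 ⟨e (i, code i u), ?_⟩
    rw [e.symm_apply_apply]
    exact ⟨u, hu, hi, rfl, rfl⟩
  · rintro j _ ⟨u, hu, hui, huκ, rfl⟩ _ ⟨u', hu', hui', huκ', rfl⟩ x hx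
    set i := (e.symm j).1
    obtain ⟨hvS, hvU⟩ := hv i ⟨u, hu, hui⟩
    obtain ⟨hx1, hx2⟩ := abs_le.1 hx
    have hy : 0 ≤ (x + L / 2) / δ := div_nonneg (by linarith) hδ0.le
    let k : Fin (n + 1) := ⟨⌊(x + L / 2) / δ⌋₊, Nat.lt_succ_of_le
      (Nat.floor_le_floor (by gcongr; linarith))⟩
    have hxk : x ∈ Set.Icc (p k) (p k + δ) := by
      have h1 : (k : ℝ) * δ ≤ x + L / 2 := (le_div_iff₀ hδ0).1 (Nat.floor_le hy)
      have h2 : x + L / 2 < ((k : ℝ) + 1) * δ := (div_lt_iff₀ hδ0).1 (Nat.lt_floor_add_one _)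
      exact ⟨by simp only [p]; linarith, by simp only [p]; linarith⟩
    have hscale : ∀ z : ℂ, ‖(ε⁻¹ : ℝ) • z‖ = ‖z‖ / ε := fun z => by
      rw [norm_smul, Real.norm_of_nonneg (by positivity), inv_mul_eq_div]
    have hbound : ∀ z : ℂ, ‖z‖ ≤ (D + 1) * ε → ‖(ε⁻¹ : ℝ) • z‖ ≤ D + 1 := fun z hz => by
      rw [hscale]
      exact (div_le_iff₀ hε).2 hz
    have hgrid := hcol _ _ (hbound _ (hclose i u hu _ hvS hui hvU k).1)
      (hbound _ (hclose i u' hu' _ hvS hui' hvU k).1) (congrFun (huκ.trans huκ'.symm) k)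
    rw [← smul_sub, sub_sub_sub_cancel_right, hscale, div_le_iff₀ hε] at hgrid
    have hosc := (hclose i u hu u' hu' hui hui' k).2 x hxk
    have := norm_le_norm_add_norm_sub' (u x 1 - u' x 1) (u (p k) 1 - u' (p k) 1)
    linarith
end
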